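/- Assume a−b is odd and N_m ≠ 0 (i.e. the associated normalized rank-2 bundle with c_1 = −1 is unstable), and let k = max{ j ∈ ℤ : N_{m−j} ≠ 0 }. Then dim_K N_{m+t} = C(k+t+2, 2) for every integer t ≤ k, where C(n,2) denotes the binomial coefficient (with the convention C(n,2) = 0 for n < 2). -/

import Mathlib

open MvPolynomial

noncomputable section

variable {K : Type*} [Field K]

/-- `p` is homogeneous of (integer) degree `d`; for `d < 0` this forces `p = 0`. -/
def homog (p : MvPolynomial (Fin 3) K) (d : ℤ) : Prop :=
  IsWeightedHomogeneous (fun _ : Fin 3 => (1 : ℤ)) p d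

/-- The degree-`d` graded piece of `⊕_{i=1}^{N} R(-a i)`, as a `K`-subspace of
`Fin N → R`, `R = K[x,y,z]`. -/
def degPiece (N : ℕ) (a : Fin N → ℤ) (d : ℤ) :
    Submodule K (Fin N → MvPolynomial (Fin 3) K) :=
  Submodule.pi Set.univ fun i =>
    weightedHomogeneousSubmodule K (fun _ : Fin 3 => (1 : ℤ)) (d - a i)

lemma mem_degPiece {N : ℕ} {a : Fin N → ℤ} {d : ℤ} {v : Fin N → MvPolynomial (Fin 3) K} :
    v ∈ degPiece (K := K) N a d ↔ ∀ i, homog (v i) (d - a i) := by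
  simp [degPiece, Submodule.mem_pi, mem_weightedHomogeneousSubmodule, homog]

/-- The map `φ : ⊕ R(-a i) → ⊕ R(-b j)` given by the matrix `Φ`, as a `K`-linear map. -/
def phiK (n : ℕ) (Φ : Matrix (Fin n) (Fin (n + 2)) (MvPolynomial (Fin 3) K)) :
    (Fin (n + 2) → MvPolynomial (Fin 3) K) →ₗ[K] (Fin n → MvPolynomial (Fin 3) K) :=
  (Matrix.mulVecLin Φ).restrictScalars K

/-- The degree-`d` graded piece of `N = ker φ`. -/
def Nd (n : ℕ) (a : Fin (n + 2) → ℤ) (Φ : Matrix (Fin n) (Fin (n + 2)) (MvPolynomial (Fin 3) K))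
    (d : ℤ) : Submodule K (Fin (n + 2) → MvPolynomial (Fin 3) K) :=
  degPiece (n + 2) a d ⊓ LinearMap.ker (phiK n Φ)

/-- The image of the degree-`d` piece of `F` inside the degree-`d` piece of `G`,
viewed as a subspace of the latter. -/
def MdSub (n : ℕ) (a : Fin (n + 2) → ℤ) (b : Fin n → ℤ)
    (Φ : Matrix (Fin n) (Fin (n + 2)) (MvPolynomial (Fin 3) K)) (d : ℤ) :
    Submodule K ↥(degPiece (K := K) n b d) :=
  Submodule.comap (degPiece (K := K) n b d).subtype
    (Submodule.map (phiK n Φ) (degPiece (n + 2) a d))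

/-- The degree-`d` graded piece of `M = coker φ`. -/
abbrev Md (n : ℕ) (a : Fin (n + 2) → ℤ) (b : Fin n → ℤ)
    (Φ : Matrix (Fin n) (Fin (n + 2)) (MvPolynomial (Fin 3) K)) (d : ℤ) :=
  ↥(degPiece (K := K) n b d) ⧸ MdSub n a b Φ d

/-- Multiplication by `L` on tuples of polynomials, as a `K`-linear map. -/
def mulL (N : ℕ) (L : MvPolynomial (Fin 3) K) :
    (Fin N → MvPolynomial (Fin 3) K) →ₗ[K] (Fin N → MvPolynomial (Fin 3) K) :=
  ((LinearMap.lsmul (MvPolynomial (Fin 3) K) (Fin N → MvPolynomial (Fin 3) K)) L).restrictScalars K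

lemma mulL_apply {N : ℕ} (L : MvPolynomial (Fin 3) K) (v : Fin N → MvPolynomial (Fin 3) K) :
    mulL N L v = L • v := rfl

lemma mulL_mem {N : ℕ} {a : Fin N → ℤ} {L : MvPolynomial (Fin 3) K} (hL : homog L 1)
    {d : ℤ} {v : Fin N → MvPolynomial (Fin 3) K} (hv : v ∈ degPiece (K := K) N a (d - 1)) :
    mulL N L v ∈ degPiece (K := K) N a d := by
  rw [mem_degPiece] at hv ⊢
  intro i
  have h := hL.mul (hv i)
  have e : (1 : ℤ) + (d - 1 - a i) = d - a i := by ring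
  rw [e] at h
  simpa [mulL_apply, smul_eq_mul, homog] using h

/-- Multiplication by `L` from the degree-`d-1` piece of `G` to the degree-`d` piece. -/
def mulLres (n : ℕ) (b : Fin n → ℤ) (L : MvPolynomial (Fin 3) K) (hL : homog L 1) (d : ℤ) :
    ↥(degPiece (K := K) n b (d - 1)) →ₗ[K] ↥(degPiece (K := K) n b d) :=
  (mulL n L).restrict fun _ hv => mulL_mem hL hv

lemma mulLres_comap (n : ℕ) (a : Fin (n + 2) → ℤ) (b : Fin n → ℤ)
    (Φ : Matrix (Fin n) (Fin (n + 2)) (MvPolynomial (Fin 3) K))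
    (L : MvPolynomial (Fin 3) K) (hL : homog L 1) (d : ℤ) :
    MdSub n a b Φ (d - 1) ≤ Submodule.comap (mulLres n b L hL d) (MdSub n a b Φ d) := by
  rintro ⟨w, hw⟩ hmem
  obtain ⟨v, hv, hφv⟩ := hmem
  refine ⟨mulL (n + 2) L v, mulL_mem hL hv, ?_⟩
  show phiK n Φ (mulL (n + 2) L v) = ((mulLres n b L hL d) ⟨w, hw⟩ : Fin n → MvPolynomial (Fin 3) K)
  have : phiK n Φ (mulL (n + 2) L v) = L • phiK n Φ v := by
    simp [phiK, mulL_apply]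
  rw [this, hφv]
  rfl

/-- The map induced by multiplication by `L` from `M_{d-1}` to `M_d`,
where `M = coker φ`. -/
def mulLmap (n : ℕ) (a : Fin (n + 2) → ℤ) (b : Fin n → ℤ)
    (Φ : Matrix (Fin n) (Fin (n + 2)) (MvPolynomial (Fin 3) K))
    (L : MvPolynomial (Fin 3) K) (hL : homog L 1) (d : ℤ) :
    Md n a b Φ (d - 1) →ₗ[K] Md n a b Φ d :=
  Submodule.mapQ (MdSub n a b Φ (d - 1)) (MdSub n a b Φ d) (mulLres n b L hL d)
    (mulLres_comap n a b Φ L hL d)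

/-- The linear form with coefficient vector `c`. -/
def linform (c : Fin 3 → K) : MvPolynomial (Fin 3) K := ∑ i, C (c i) * X i

lemma homog_linform (c : Fin 3 → K) : homog (linform c) 1 := by
  rw [homog, ← mem_weightedHomogeneousSubmodule]
  refine sum_mem fun i _ => ?_
  rw [mem_weightedHomogeneousSubmodule]
  simpa using (isWeightedHomogeneous_C (fun _ : Fin 3 => (1 : ℤ)) (c i)).mul
    (isWeightedHomogeneous_X K (fun _ : Fin 3 => (1 : ℤ)) i)

/-- Finite length of `coker φ`: all sufficiently high graded pieces vanish. -/
def FiniteColength (n : ℕ) (a : Fin (n + 2) → ℤ) (b : Fin n → ℤ)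
    (Φ : Matrix (Fin n) (Fin (n + 2)) (MvPolynomial (Fin 3) K)) : Prop :=
  ∃ D : ℤ, ∀ d : ℤ, D ≤ d →
    degPiece (K := K) n b d ≤ Submodule.map (phiK n Φ) (degPiece (n + 2) a d)

end

section Helpers

open Finset

variable {K : Type*} [Field K]

/-- Degree-tracking homomorphism `x_i ↦ x_i t`. -/
noncomputable def degHom : MvPolynomial (Fin 3) K →+* Polynomial (MvPolynomial (Fin 3) K) :=
  eval₂Hom (Polynomial.C.comp C) (fun i => Polynomial.C (X i) * Polynomial.X)

lemma degHom_monomial (u : Fin 3 →₀ ℕ) (c : K) :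
    degHom (monomial u c) = Polynomial.monomial (∑ i, u i) (monomial u c) := by
  rw [degHom, coe_eval₂Hom, eval₂_monomial, Finsupp.prod_fintype _ _ (by simp)]
  simp only [mul_pow, Finset.prod_mul_distrib, Finset.prod_pow_eq_pow_sum]
  rw [← Polynomial.C_mul_X_pow_eq_monomial, monomial_eq (s := u), Finsupp.prod_fintype _ _ (by simp)]
  simp [mul_assoc]

lemma coeff_degHom (p : MvPolynomial (Fin 3) K) (e : ℕ) (u : Fin 3 →₀ ℕ) :
    coeff u ((degHom p).coeff e) = if ∑ i, u i = e then coeff u p else 0 := by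
  induction p using MvPolynomial.induction_on' with
  | monomial v c =>
    rw [degHom_monomial, Polynomial.coeff_monomial]
    by_cases h : v = u
    · subst h; split_ifs <;> simp
    · split_ifs <;> simp [coeff_monomial, h]
  | add p q hp hq =>
    rw [map_add, Polynomial.coeff_add, coeff_add, hp, hq, coeff_add]
    split_ifs <;> simp

lemma weight_one (u : Fin 3 →₀ ℕ) :
    Finsupp.weight (fun _ : Fin 3 => (1 : ℤ)) u = ((∑ i, u i : ℕ) : ℤ) := by
  rw [Finsupp.weight_apply, Finsupp.sum_fintype _ _ (by simp)]
  simp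

lemma homog_iff (p : MvPolynomial (Fin 3) K) (e : ℕ) :
    homog p (e : ℤ) ↔ degHom p = Polynomial.monomial e p := by
  constructor
  · intro h
    ext f u
    rw [coeff_degHom, Polynomial.coeff_monomial]
    by_cases hu : coeff u p = 0
    · split_ifs <;> simp [hu]
    · have := h hu
      rw [weight_one] at this
      have : ∑ i, u i = e := by exact_mod_cast this
      rw [this]
      split_ifs <;> simp
  · intro h u hu
    rw [weight_one]
    by_contra hne
    have hne' : ¬ ∑ i, u i = e := fun h => hne (by exact_mod_cast h)
    have h1 := coeff_degHom p e u
    rw [if_neg hne', h, Polynomial.coeff_monomial, if_pos rfl] at h1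
    exact hu h1

lemma homog_neg {p : MvPolynomial (Fin 3) K} {d : ℤ} (hd : d < 0) (h : homog p d) : p = 0 := by
  ext u
  by_contra hu
  have := h hu
  rw [weight_one] at this
  have h2 : (0 : ℤ) ≤ ((∑ i, u i : ℕ) : ℤ) := Int.natCast_nonneg _
  omega

lemma eval_degHom (p : MvPolynomial (Fin 3) K) : (degHom p).eval 1 = p := by
  induction p using MvPolynomial.induction_on' with
  | monomial v c => rw [degHom_monomial]; simp
  | add p q hp hq => rw [map_add, Polynomial.eval_add, hp, hq]

lemma eq_monomial_of_deg {P : Polynomial (MvPolynomial (Fin 3) K)}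
    (h : P.natDegree = P.natTrailingDegree) :
    P = Polynomial.monomial P.natDegree (P.coeff P.natDegree) := by
  ext1 f
  rw [Polynomial.coeff_monomial]
  split_ifs with hf
  · rw [hf]
  · rcases lt_or_gt_of_ne hf with h1 | h1
    · exact Polynomial.coeff_eq_zero_of_natDegree_lt h1
    · exact Polynomial.coeff_eq_zero_of_lt_natTrailingDegree (h ▸ h1)

lemma homog_of_deg {p : MvPolynomial (Fin 3) K}
    (h : (degHom p).natDegree = (degHom p).natTrailingDegree) :
    homog p ((degHom p).natDegree : ℤ) := by
  rw [homog_iff]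
  have h1 := eq_monomial_of_deg h
  have h2 := eval_degHom p
  rw [h1, Polynomial.eval_monomial] at h2
  simp only [one_pow, mul_one] at h2
  rw [h2] at h1
  exact h1

lemma homog_factor {p q : MvPolynomial (Fin 3) K} {d : ℤ} (h0 : p * q ≠ 0)
    (h : homog (p * q) d) : ∃ e : ℕ, homog p (e : ℤ) ∧ homog q (d - e) := by
  rcases lt_or_ge d 0 with hd | hd
  · exact absurd (homog_neg hd h) h0
  lift d to ℕ using hd
  have inj : ∀ r : MvPolynomial (Fin 3) K, r ≠ 0 → degHom r ≠ 0 := by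
    intro r hr h'
    apply hr
    rw [← eval_degHom r, h', Polynomial.eval_zero]
  have hp := inj p (left_ne_zero_of_mul h0)
  have hq := inj q (right_ne_zero_of_mul h0)
  rw [homog_iff, map_mul] at h
  have h1 := congrArg Polynomial.natDegree h
  have h2 := congrArg Polynomial.natTrailingDegree h
  rw [Polynomial.natDegree_mul hp hq, Polynomial.natDegree_monomial_eq _ h0] at h1
  rw [Polynomial.natTrailingDegree_mul hp hq, Polynomial.natTrailingDegree_monomial h0] at h2
  have h3 := Polynomial.natTrailingDegree_le_natDegree (degHom p)
  have h4 := Polynomial.natTrailingDegree_le_natDegree (degHom q)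
  refine ⟨(degHom p).natDegree, homog_of_deg (by omega), ?_⟩
  have h5 := homog_of_deg (p := q) (by omega)
  have : ((degHom q).natDegree : ℤ) = (d : ℤ) - (degHom p).natDegree := by omega
  rwa [this] at h5

lemma homog_quot {p q : MvPolynomial (Fin 3) K} {d e : ℤ} (hp : homog p e) (hp0 : p ≠ 0)
    (h : homog (p * q) d) : homog q (d - e) := by
  by_cases hq : q = 0
  · rw [hq]; exact isWeightedHomogeneous_zero _ _ _
  · obtain ⟨f, hf, hf'⟩ := homog_factor (mul_ne_zero hp0 hq) h
    have : (f : ℤ) = e := hf.inj_right hp0 hp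
    rwa [this] at hf'

lemma homog_zero_C {p : MvPolynomial (Fin 3) K} (h : homog p 0) : ∃ c, p = C c := by
  refine ⟨coeff 0 p, ?_⟩
  ext u
  rw [coeff_C]
  split_ifs with hu
  · rw [hu]
  · by_contra hne
    have := h hne
    rw [weight_one] at this
    have h2 : ∑ i, u i = 0 := by exact_mod_cast this
    apply hu
    ext i
    exact ((Finset.sum_eq_zero_iff.mp h2) i (mem_univ i)).symm

lemma homog_det {ι : Type*} [Fintype ι] [DecidableEq ι]
    (A : Matrix ι ι (MvPolynomial (Fin 3) K)) (r c : ι → ℤ)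
    (h : ∀ i j, homog (A i j) (c j - r i)) : homog A.det (∑ j, c j - ∑ i, r i) := by
  rw [Matrix.det_apply, homog]
  refine IsWeightedHomogeneous.sum _ _ _ fun σ _ => ?_
  have h1 : homog (∏ i, A (σ i) i) (∑ i, (c i - r (σ i))) :=
    IsWeightedHomogeneous.prod _ _ _ fun i _ => h _ _
  rw [Finset.sum_sub_distrib, Equiv.sum_comp σ r] at h1
  rcases Int.units_eq_one_or (Equiv.Perm.sign σ) with h2 | h2
  · rw [h2, one_smul]; exact h1
  · rw [h2, Units.neg_smul, one_smul]; exact h1.neg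

/-- A Cauchy-Binet type identity. -/
lemma det_identity (n : ℕ) {R : Type*} [CommRing R] (Φ : Matrix (Fin n) (Fin (n + 2)) R)
    (Ψ : Matrix (Fin (n + 2)) (Fin n) R) (f : R) (hΨ : Φ * Ψ = f • (1 : Matrix (Fin n) (Fin n) R))
    (s v : Fin (n + 2) → R) (hs : Φ.mulVec s = 0) (hv : Φ.mulVec v = 0) (i j : Fin (n + 2)) :
    f ^ n * (s i * v j - v i * s j) =
      (Matrix.of (fun (x : Fin n ⊕ Fin 2) (l : Fin n ⊕ Fin 2) =>
        (Sum.elim (fun y => Φ y) (![Pi.single i 1, Pi.single j 1]) x : Fin (n + 2) → R)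
          (finSumFinEquiv l))).det *
      (Matrix.of (fun (l : Fin n ⊕ Fin 2) (x : Fin n ⊕ Fin 2) =>
        Sum.elim (fun y => Ψ (finSumFinEquiv l) y)
          (fun z => (![s, v] z) (finSumFinEquiv l)) x)).det := by
  rw [← Matrix.det_mul]
  have : (Matrix.of (fun (x : Fin n ⊕ Fin 2) (l : Fin n ⊕ Fin 2) =>
        (Sum.elim (fun y => Φ y) (![Pi.single i 1, Pi.single j 1]) x : Fin (n + 2) → R)
          (finSumFinEquiv l))) * (Matrix.of (fun (l : Fin n ⊕ Fin 2) (x : Fin n ⊕ Fin 2) =>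
        Sum.elim (fun y => Ψ (finSumFinEquiv l) y)
          (fun z => (![s, v] z) (finSumFinEquiv l)) x)) =
      Matrix.fromBlocks (f • (1 : Matrix (Fin n) (Fin n) R)) 0
        (Matrix.of ![fun y => Ψ i y, fun y => Ψ j y]) !![s i, v i; s j, v j] := by
    ext x y
    rw [Matrix.mul_apply]
    simp only [Matrix.of_apply]
    rw [Equiv.sum_comp (finSumFinEquiv (m := n) (n := 2)) (fun l =>
      (Sum.elim (fun y => Φ y) (![Pi.single i 1, Pi.single j 1]) x : Fin (n + 2) → R) l *
        Sum.elim (fun y => Ψ l y) (fun z => (![s, v] z) l) y)]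
    rcases x with x | x <;> rcases y with y | y
    · simp only [Sum.elim_inl, Matrix.fromBlocks_apply₁₁, ← hΨ, Matrix.mul_apply]
    · fin_cases y
      · exact congrFun hs x
      · exact congrFun hv x
    · fin_cases x <;> simp [Pi.single_apply]
    · fin_cases x <;> fin_cases y <;> simp [Pi.single_apply]
  rw [this, Matrix.det_fromBlocks_zero₁₂, Matrix.det_smul, Matrix.det_one, Matrix.det_fin_two_of]
  simp

lemma exists_psi (n : ℕ) (a : Fin (n + 2) → ℤ) (b : Fin n → ℤ)
    (Φ : Matrix (Fin n) (Fin (n + 2)) (MvPolynomial (Fin 3) K))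
    (hfin : FiniteColength n a b Φ) : ∃ D : ℕ, ∀ x : Fin 3,
      ∃ Ψ : Matrix (Fin (n + 2)) (Fin n) (MvPolynomial (Fin 3) K),
        Φ * Ψ = (X x ^ D : MvPolynomial (Fin 3) K) • 1 ∧
        ∀ i j, homog (Ψ i j) (b j + D - a i) := by
  obtain ⟨D0, hD⟩ := hfin
  refine ⟨(|D0| + ∑ j, |b j|).toNat, fun x => ?_⟩
  have hnn : 0 ≤ |D0| + ∑ j, |b j| := by positivity
  set D := (|D0| + ∑ j, |b j|).toNat with hDdef
  have hDe : (D : ℤ) = |D0| + ∑ j, |b j| := Int.toNat_of_nonneg hnn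
  have key : ∀ j : Fin n, ∃ w ∈ degPiece (K := K) (n + 2) a (b j + D),
      phiK n Φ w = Pi.single j (X x ^ D) := by
    intro j
    have h1 : |b j| ≤ ∑ j, |b j| :=
      Finset.single_le_sum (f := fun j => |b j|) (fun i _ => abs_nonneg _) (mem_univ j)
    have h2 := neg_abs_le (b j)
    have h3 := le_abs_self D0
    refine hD (b j + D) (by omega) (mem_degPiece.mpr fun i => ?_)
    by_cases hij : i = j
    · subst hij
      rw [Pi.single_eq_same]
      have := (isWeightedHomogeneous_X K (fun _ : Fin 3 => (1 : ℤ)) x).pow D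
      have e : b i + D - b i = D • (1 : ℤ) := by simp
      rw [e]; exact this
    · rw [Pi.single_eq_of_ne hij]; exact isWeightedHomogeneous_zero _ _ _
  choose w hw hw' using key
  refine ⟨Matrix.of (fun i j => w j i), ?_, fun i j => mem_degPiece.mp (hw j) i⟩
  ext1 i j
  have := congrFun (hw' j) i
  rw [Matrix.smul_apply, Matrix.one_apply, Matrix.mul_apply]
  refine Eq.trans this ?_
  rw [Pi.single_apply]
  simp

lemma not_X_pow_dvd {h : MvPolynomial (Fin 3) K} {d : ℤ} {N : ℕ} (hh : homog h d)
    (hd : d < N) (x : Fin 3) (hdvd : (X x ^ N : MvPolynomial (Fin 3) K) ∣ h) : h = 0 := by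
  obtain ⟨q, rfl⟩ := hdvd
  have hX : homog (X x ^ N : MvPolynomial (Fin 3) K) (N : ℤ) := by
    have := (isWeightedHomogeneous_X K (fun _ : Fin 3 => (1 : ℤ)) x).pow N
    rw [nsmul_eq_mul, mul_one] at this
    exact this
  have := homog_quot hX (pow_ne_zero _ (X_ne_zero x)) hh
  rw [homog_neg (by omega) this, mul_zero]

lemma wedge_zero (n : ℕ) (a : Fin (n + 2) → ℤ) (b : Fin n → ℤ)
    (Φ : Matrix (Fin n) (Fin (n + 2)) (MvPolynomial (Fin 3) K))
    (hfin : FiniteColength n a b Φ) (d e : ℤ)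
    (hde : d + e < (∑ i, a i) - (∑ j, b j))
    (s v : Fin (n + 2) → MvPolynomial (Fin 3) K) (hs : s ∈ Nd n a Φ d) (hv : v ∈ Nd n a Φ e)
    (i j : Fin (n + 2)) : s i * v j = v i * s j := by
  obtain ⟨D, hD⟩ := exists_psi n a b Φ hfin
  have hs2 : Φ.mulVec s = 0 := hs.2
  have hv2 : Φ.mulVec v = 0 := hv.2
  have key : ∀ x : Fin 3, ∃ h : MvPolynomial (Fin 3) K,
      homog h (n * D + (d + e - ((∑ i, a i) - (∑ j, b j)))) ∧
      (X x ^ (n * D) : MvPolynomial (Fin 3) K) * (s i * v j - v i * s j) =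
      (Matrix.of (fun (x : Fin n ⊕ Fin 2) (l : Fin n ⊕ Fin 2) =>
        (Sum.elim (fun y => Φ y) (![Pi.single i 1, Pi.single j 1]) x :
          Fin (n + 2) → MvPolynomial (Fin 3) K)
          (finSumFinEquiv l))).det * h := by
    intro x
    obtain ⟨Ψ, hΨ, hΨh⟩ := hD x
    refine ⟨(Matrix.of (fun (l : Fin n ⊕ Fin 2) (x : Fin n ⊕ Fin 2) =>
        Sum.elim (fun y => Ψ (finSumFinEquiv l) y)
          (fun z => (![s, v] z) (finSumFinEquiv l)) x)).det, ?_, ?_⟩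
    rotate_left
    · rw [mul_comm n D, pow_mul]
      exact det_identity n Φ Ψ _ hΨ s v hs2 hv2 i j
    · have := homog_det (Matrix.of (fun (l : Fin n ⊕ Fin 2) (x : Fin n ⊕ Fin 2) =>
        Sum.elim (fun y => Ψ (finSumFinEquiv l) y)
          (fun z => (![s, v] z) (finSumFinEquiv l)) x))
        (fun l => a (finSumFinEquiv l)) (Sum.elim (fun j => b j + D) ![d, e]) (by
          rintro l (y | y)
          · exact hΨh _ _
          · fin_cases y
            · exact mem_degPiece.mp hs.1 _
            · exact mem_degPiece.mp hv.1 _)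
      convert this using 1
      rw [Equiv.sum_comp (finSumFinEquiv (m := n) (n := 2)) a]
      simp [Finset.sum_add_distrib]
      ring
  obtain ⟨h0, hh0, e0⟩ := key 0
  obtain ⟨h1, hh1, e1⟩ := key 1
  by_contra hne
  have hW : s i * v j - v i * s j ≠ 0 := sub_ne_zero.mpr hne
  set W := s i * v j - v i * s j
  set Δ := (Matrix.of (fun (x : Fin n ⊕ Fin 2) (l : Fin n ⊕ Fin 2) =>
        (Sum.elim (fun y => Φ y) (![Pi.single i 1, Pi.single j 1]) x :
          Fin (n + 2) → MvPolynomial (Fin 3) K)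
          (finSumFinEquiv l))).det
  have hX : ∀ x : Fin 3, (X x ^ (n * D) : MvPolynomial (Fin 3) K) ≠ 0 :=
    fun x => pow_ne_zero _ (X_ne_zero x)
  have hΔ : Δ ≠ 0 := by
    intro h
    rw [h, zero_mul] at e0
    exact mul_ne_zero (hX 0) hW e0
  have e2 : (X 0 ^ (n * D) : MvPolynomial (Fin 3) K) * h1 = X 1 ^ (n * D) * h0 := by
    apply mul_left_cancel₀ hΔ
    linear_combination (X 1 ^ (n * D)) * e0 - (X 0 ^ (n * D)) * e1
  have hdvd : (X 0 ^ (n * D) : MvPolynomial (Fin 3) K) ∣ h0 := by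
    refine (X_prime (R := K) (i := (0 : Fin 3))).pow_dvd_of_dvd_mul_left _ ?_ ⟨h1, e2.symm⟩
    intro h
    have := (X_prime (R := K) (i := (0 : Fin 3))).dvd_of_dvd_pow h
    rw [X_dvd_X] at this
    exact absurd this (by decide)
  have h00 := not_X_pow_dvd hh0 (by push_cast; omega) 0 hdvd
  rw [h00, mul_zero] at e0
  exact mul_ne_zero (hX 0) hW e0

lemma finrank_homog (d : ℤ) :
    Module.finrank K (weightedHomogeneousSubmodule K (fun _ : Fin 3 => (1 : ℤ)) d) =
      Nat.choose (d + 2).toNat 2 := by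
  rcases lt_or_ge d 0 with hd | hd
  · have : weightedHomogeneousSubmodule K (fun _ : Fin 3 => (1 : ℤ)) d = ⊥ := by
      rw [eq_bot_iff]
      intro p hp
      exact homog_neg hd hp
    rw [this, finrank_bot, Nat.choose_eq_zero_of_lt (by omega)]
  · lift d to ℕ using hd
    rw [weightedHomogeneousSubmodule_eq_finsupp_supported]
    rw [(AddMonoidAlgebra.supportedEquivFinsupp _).finrank_eq]
    have hset : {u : Fin 3 →₀ ℕ | Finsupp.weight (fun _ : Fin 3 => (1 : ℤ)) u = (d : ℤ)} =
        ((Finset.univ : Finset (Fin 3)).finsuppAntidiag d : Set (Fin 3 →₀ ℕ)) := by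
      ext u
      simp only [Set.mem_ofPred_eq, weight_one, Finset.mem_coe, Finset.mem_finsuppAntidiag]
      constructor
      · intro h; exact ⟨by exact_mod_cast h, by simp⟩
      · intro h; exact_mod_cast h.1
    rw [hset]
    rw [Module.finrank_finsupp_self, ← Nat.card_eq_fintype_card, Nat.card_coe_set_eq,
      Set.ncard_coe_finset, Finset.card_finsuppAntidiag_nat_eq_choose]
    have : ((d : ℤ) + 2).toNat = d + 2 := by omega
    rw [this]
    simp only [Finset.card_univ, Fintype.card_fin]
    rw [show 3 + d - 1 = d + 2 by omega, ← Nat.choose_symm_add]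

lemma exists_mul (n : ℕ) (a : Fin (n + 2) → ℤ)
    (Φ : Matrix (Fin n) (Fin (n + 2)) (MvPolynomial (Fin 3) K)) (d e : ℤ)
    (hmin : ∀ f : ℤ, Nd n a Φ f ≠ ⊥ → d ≤ f)
    (s v : Fin (n + 2) → MvPolynomial (Fin 3) K) (hs : s ∈ Nd n a Φ d) (hv : v ∈ Nd n a Φ e)
    (hs0 : s ≠ 0) (hW : ∀ i j, s i * v j = v i * s j) :
    ∃ p : MvPolynomial (Fin 3) K, homog p (e - d) ∧ v = p • s := by
  obtain ⟨i, hi⟩ := Function.ne_iff.mp hs0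
  have hi : s i ≠ 0 := hi
  obtain ⟨q, p, g, hrel, hq, hp⟩ := UniqueFactorizationMonoid.exists_reduced_factors (s i) hi (v i)
  have hg : g ≠ 0 := by rintro rfl; simp at hq; exact hi hq.symm
  have hq0 : q ≠ 0 := by rintro rfl; simp at hq; exact hi hq.symm
  have hpq : ∀ j, q * v j = p * s j := by
    intro j
    apply mul_left_cancel₀ hg
    have := hW i j
    rw [← hq, ← hp] at this
    linear_combination this
  have hdvd : ∀ j, q ∣ s j := fun j => hrel.dvd_of_dvd_mul_left ⟨v j, (hpq j).symm⟩
  choose s' hs' using hdvd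
  have hsd := mem_degPiece.mp hs.1
  have hvd := mem_degPiece.mp hv.1
  have hqh : ∃ f : ℕ, homog q (f : ℤ) := by
    have h1 := hsd i
    rw [hs' i] at h1
    obtain ⟨f, hf, -⟩ := homog_factor (by rw [← hs' i]; exact hi) h1
    exact ⟨f, hf⟩
  obtain ⟨f, hf⟩ := hqh
  have hss : s = q • s' := funext hs'
  have hs'N : s' ∈ Nd n a Φ (d - f) := by
    refine ⟨mem_degPiece.mpr fun j => ?_, ?_⟩
    · have h1 := hsd j
      rw [hs' j] at h1
      have := homog_quot hf hq0 h1
      have e1 : d - a j - f = d - f - a j := by ring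
      rwa [e1] at this
    · have h1 : Φ.mulVec s = 0 := hs.2
      rw [hss, Matrix.mulVec_smul] at h1
      have h2 : Φ.mulVec s' = 0 := (smul_eq_zero.mp h1).resolve_left hq0
      exact h2
  have hs'0 : s' ≠ 0 := by
    rintro h
    rw [h, smul_zero] at hss
    exact hs0 hss
  have hle := hmin (d - f) (fun h => hs'0 (by rw [h] at hs'N; exact hs'N))
  have hf0 : (f : ℤ) = 0 := by omega
  rw [hf0] at hf
  obtain ⟨c, rfl⟩ := homog_zero_C hf
  have hc : c ≠ 0 := by rintro rfl; simp at hq0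
  have hcc : (C c⁻¹ * C c : MvPolynomial (Fin 3) K) = 1 := by
    rw [← C_mul, inv_mul_cancel₀ hc, C_1]
  have hvp : ∀ j, v j = (C c⁻¹ * p) * s j := by
    intro j
    linear_combination (C c⁻¹) * hpq j - v j * hcc
  refine ⟨C c⁻¹ * p, ?_, funext hvp⟩
  have h1 := hvd i
  rw [hvp i, mul_comm] at h1
  have := homog_quot (hsd i) hi h1
  have e1 : e - a i - (d - a i) = e - d := by ring
  rwa [e1] at this

lemma finrank_Nd (n : ℕ) (a : Fin (n + 2) → ℤ) (b : Fin n → ℤ)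
    (Φ : Matrix (Fin n) (Fin (n + 2)) (MvPolynomial (Fin 3) K))
    (hfin : FiniteColength n a b Φ) (d e : ℤ)
    (hde : d + e < (∑ i, a i) - (∑ j, b j))
    (hd : Nd n a Φ d ≠ ⊥) (hmin : ∀ f : ℤ, Nd n a Φ f ≠ ⊥ → d ≤ f) :
    Module.finrank K (Nd n a Φ e) = Nat.choose (e - d + 2).toNat 2 := by
  obtain ⟨s, hs, hs0⟩ := Submodule.exists_mem_ne_zero_of_ne_bot hd
  let T : MvPolynomial (Fin 3) K →ₗ[K] (Fin (n + 2) → MvPolynomial (Fin 3) K) :=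
    ((LinearMap.toSpanSingleton (MvPolynomial (Fin 3) K) _ s).restrictScalars K)
  have hT : ∀ p, T p = p • s := fun p => rfl
  have hinj : Function.Injective T := by
    rw [injective_iff_map_eq_zero]
    intro p hp
    rw [hT] at hp
    exact (smul_eq_zero.mp hp).resolve_right hs0
  have hmap : Nd n a Φ e =
      (weightedHomogeneousSubmodule K (fun _ : Fin 3 => (1 : ℤ)) (e - d)).map T := by
    ext v
    constructor
    · intro hv
      obtain ⟨p, hp, rfl⟩ := exists_mul n a Φ d e hmin s v hs hv hs0
        (wedge_zero n a b Φ hfin d e hde s v hs hv)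
      exact ⟨p, hp, rfl⟩
    · rintro ⟨p, hp, rfl⟩
      refine ⟨mem_degPiece.mpr fun j => ?_, ?_⟩
      · have h1 := IsWeightedHomogeneous.mul hp (mem_degPiece.mp hs.1 j)
        have e1 : e - d + (d - a j) = e - a j := by ring
        rw [e1] at h1
        exact h1
      · have h1 : Φ.mulVec s = 0 := hs.2
        have h2 : Φ.mulVec (p • s) = 0 := by rw [Matrix.mulVec_smul, h1, smul_zero]
        exact h2
  rw [hmap, ← finrank_homog (K := K) (e - d)]
  exact (Submodule.equivMapOfInjective T hinj _).finrank_eq.symm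

end Helpers

/-- If `a - b` is odd (`a - b = 2m + 1`) and `N_m ≠ 0` (the associated
normalized rank-2 bundle with `c₁ = -1` is unstable), and `k = max{ j : N_{m-j} ≠ 0 }`, then
`dim_K N_{m+t} = C(k+t+2, 2)` for every integer `t ≤ k` (with `C(n,2) = 0` for `n < 2`). -/
theorem statement9 {K : Type*} [Field K] [IsAlgClosed K] [CharZero K]
    (n : ℕ) (a : Fin (n + 2) → ℤ) (b : Fin n → ℤ)
    (Φ : Matrix (Fin n) (Fin (n + 2)) (MvPolynomial (Fin 3) K))
    (hΦ : ∀ j i, homog (Φ j i) (a i - b j))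
    (hfin : FiniteColength n a b Φ)
    (m : ℤ) (hm : (∑ i, a i) - (∑ j, b j) = 2 * m + 1)
    (hunstable : Nd n a Φ m ≠ ⊥)
    (k : ℤ) (hk₁ : Nd n a Φ (m - k) ≠ ⊥) (hk₂ : ∀ j : ℤ, Nd n a Φ (m - j) ≠ ⊥ → j ≤ k) :
    ∀ t : ℤ, t ≤ k →
      Module.finrank K (Nd n a Φ (m + t)) = Nat.choose (k + t + 2).toNat 2 := by
  intro t ht
  have h := finrank_Nd n a b Φ hfin (m - k) (m + t) (by omega) hk₁ (by
    intro f hf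
    have := hk₂ (m - f) (by rwa [sub_sub_cancel])
    omega)
  rw [h]
  congr 2
  ring
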